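/- Gap labels for the full shift with a Bernoulli measure: let 𝒜 = {1, …, m}, let μ₀ be a probability measure on 𝒜 with weights w_j = μ₀({j}) for 1 ≤ j ≤ m, and let μ = μ₀^ℤ be the corresponding product (Bernoulli) measure on Ω = 𝒜^ℤ. Then the set {∫_Ω g dμ : g : Ω → ℤ continuous} ⊆ ℝ equals the subring of ℝ generated by {w_1, …, w_m}, i.e., ℤ[w_1, …, w_m] = {∑ over finitely many multi-indices k ∈ ℤ_{≥0}^m of c_k · w_1^{k_1} ⋯ w_m^{k_m} : c_k ∈ ℤ}. -/

import Mathlib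

/-!
Write `[s, a]` for the cylinder of all `ω` that agree with `a` on the finite set `s` of
coordinates; its measure is the monomial `∏ i ∈ s, w (a i)`.

A continuous integer-valued `g` is locally constant, so by compactness of `Fin m ^ ℤ` it depends
on finitely many coordinates `s` only (`exists_finset_dependsOn`). It is then an integer
combination of indicators of cylinders over `s`, and its integral is the same combination of
monomials in the weights.

Conversely, since the shift space has infinitely many coordinates, every monomial in the weights
(with repetitions) is the measure of some cylinder (`exists_cylinder_of_mem_closure`), that is, the
integral of the continuous function `cylInd s a`. The set of integrals is an additive group, and
the subring generated by the weights is the additive group generated by the monomials.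
-/

open MeasureTheory

/-- The indicator function of the cylinder of sequences agreeing with `a` on `s`, as a continuous
integer-valued function. It is written as a product so that continuity is immediate. -/
noncomputable def cylInd {m : ℕ} (s : Finset ℤ) (a : ℤ → Fin m) : C((ℤ → Fin m), ℤ) where
  toFun ω := ∏ i ∈ s, if ω i = a i then 1 else 0
  continuous_toFun := continuous_finsetProd _ fun i _ =>
    (continuous_of_discreteTopology (f := fun x : Fin m => if x = a i then (1 : ℤ) else 0)).comp
      (continuous_apply i)

lemma cylInd_apply {m : ℕ} (s : Finset ℤ) (a ω : ℤ → Fin m) :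
    cylInd s a ω = if ∀ i ∈ s, ω i = a i then 1 else 0 := by
  simp only [cylInd, ContinuousMap.coe_mk]
  exact Finset.prod_ite_zero.trans (by simp)

lemma integral_cylInd {m : ℕ} (μ : Measure (ℤ → Fin m)) (s : Finset ℤ) (a : ℤ → Fin m) :
    ∫ ω, ((cylInd s a ω : ℤ) : ℝ) ∂μ = (μ {ω : ℤ → Fin m | ∀ i ∈ s, ω i = a i}).toReal := by
  have hm : MeasurableSet {ω : ℤ → Fin m | ∀ i ∈ s, ω i = a i} := by
    have h : {ω : ℤ → Fin m | ∀ i ∈ s, ω i = a i} = ⋂ i ∈ s, (fun ω => ω i) ⁻¹' {a i} := by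
      ext ω; simp
    rw [h]
    exact s.measurableSet_biInter fun i _ => measurable_pi_apply i (MeasurableSet.singleton _)
  have h : (fun ω => ((cylInd s a ω : ℤ) : ℝ))
      = {ω : ℤ → Fin m | ∀ i ∈ s, ω i = a i}.indicator 1 := by
    ext ω
    simp [cylInd_apply, Set.indicator_apply]
  rw [h, integral_indicator_one hm]
  rfl

lemma integrable_intCast {m : ℕ} (μ : Measure (ℤ → Fin m)) [IsProbabilityMeasure μ]
    (g : C((ℤ → Fin m), ℤ)) : Integrable (fun ω => ((g ω : ℤ) : ℝ)) μ :=
  (continuous_of_discreteTopology.comp g.continuous :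
    Continuous fun ω => ((g ω : ℤ) : ℝ)).integrable_of_hasCompactSupport
      (HasCompactSupport.of_compactSpace _)

/-- A continuous integer-valued function on the full shift depends on finitely many coordinates
only, by compactness. -/
lemma exists_finset_dependsOn {m : ℕ} (g : C((ℤ → Fin m), ℤ)) :
    ∃ s : Finset ℤ, ∀ ω ω' : ℤ → Fin m, (∀ i ∈ s, ω i = ω' i) → g ω = g ω' := by
  have hloc : ∀ a : ℤ → Fin m, ∃ s : Finset ℤ,
      ∀ ω : ℤ → Fin m, (∀ i ∈ s, ω i = a i) → g ω = g a := by
    intro a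
    have ho : IsOpen (g ⁻¹' {g a}) := (isOpen_discrete _).preimage g.continuous
    obtain ⟨s, u, hu, hsub⟩ := isOpen_pi_iff.1 ho a rfl
    refine ⟨s, fun ω hω => hsub fun i hi => ?_⟩
    rw [hω i hi]
    exact (hu i hi).2
  choose S hS using hloc
  obtain ⟨t, ht⟩ := CompactSpace.elim_nhds_subcover
    (fun a : ℤ → Fin m => {ω | ∀ i ∈ S a, ω i = a i}) (fun a => by
      have h : {ω : ℤ → Fin m | ∀ i ∈ S a, ω i = a i} = (S a : Set ℤ).pi fun i => {a i} := by
        ext ω; simp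
      rw [h]
      exact set_pi_mem_nhds (S a).finite_toSet fun i _ => (isOpen_discrete _).mem_nhds rfl)
  refine ⟨t.biUnion S, fun ω ω' h => ?_⟩
  have hω : ω ∈ ⋃ a ∈ t, {ω : ℤ → Fin m | ∀ i ∈ S a, ω i = a i} := by rw [ht]; trivial
  simp only [Set.mem_iUnion] at hω
  obtain ⟨a, hat, ha⟩ := hω
  rw [hS a ω ha, hS a ω' fun i hi => ?_]
  rw [← h i (Finset.mem_biUnion.2 ⟨a, hat, hi⟩), ha i hi]

/-- Every monomial in the weights is the product of the weights along a cylinder: each further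
factor is placed at a coordinate not used before. -/
lemma exists_cylinder_of_mem_closure {m : ℕ} (hm : Nonempty (Fin m)) (w : Fin m → ℝ) {x : ℝ}
    (hx : x ∈ Submonoid.closure (Set.range w)) :
    ∃ (s : Finset ℤ) (a : ℤ → Fin m), ∏ i ∈ s, w (a i) = x := by
  induction hx using Submonoid.closure_induction_left with
  | one => exact ⟨∅, fun _ => hm.some, by simp⟩
  | mul_left y hy z _ ih =>
    obtain ⟨j, rfl⟩ := hy
    obtain ⟨s, a, rfl⟩ := ih
    obtain ⟨k, hk⟩ := Infinite.exists_notMem_finset s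
    refine ⟨insert k s, Function.update a k j, ?_⟩
    rw [Finset.prod_insert hk, Function.update_self]
    congr 1
    refine Finset.prod_congr rfl fun i hi => ?_
    rw [Function.update_of_ne (ne_of_mem_of_not_mem hi hk)]

/-- Gap labels for the full shift with a Bernoulli measure: if `μ` is the product
(Bernoulli) measure on `𝒜^ℤ`, `𝒜 = {1,…,m}`, with weights `w_1, …, w_m`, then the set
of integrals `∫ g dμ` of continuous integer-valued functions `g` equals the subring
`ℤ[w_1, …, w_m]` of `ℝ` generated by the weights. -/
theorem stmt19 (m : ℕ) (w : Fin m → ℝ)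
    (hw0 : ∀ j, 0 ≤ w j) (hw1 : ∑ j, w j = 1)
    (μ : Measure (ℤ → Fin m)) [IsProbabilityMeasure μ]
    (hμ : ∀ (s : Finset ℤ) (a : ℤ → Fin m),
      (μ {ω : ℤ → Fin m | ∀ i ∈ s, ω i = a i}).toReal = ∏ i ∈ s, w (a i)) :
    {x : ℝ | ∃ g : C((ℤ → Fin m), ℤ), ∫ ω, ((g ω : ℤ) : ℝ) ∂μ = x}
      = ↑(Subring.closure (Set.range w)) := by
  have hm : Nonempty (Fin m) := by
    by_contra h
    rw [not_nonempty_iff] at h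
    simp at hw1
  have hcyl (s : Finset ℤ) (a : ℤ → Fin m) :
      ∫ ω, ((cylInd s a ω : ℤ) : ℝ) ∂μ = ∏ i ∈ s, w (a i) := by
    rw [integral_cylInd, hμ]
  ext x
  constructor
  · rintro ⟨g, rfl⟩
    obtain ⟨s, hs⟩ := exists_finset_dependsOn g
    -- The values of `hm.some` outside `s` are irrelevant.
    let e : (s → Fin m) → ℤ → Fin m := fun b i => if h : i ∈ s then b ⟨i, h⟩ else hm.some
    have hg : ∀ ω, ((g ω : ℤ) : ℝ)
        = ∑ b : s → Fin m, (g (e b) : ℝ) * ((cylInd s (e b) ω : ℤ) : ℝ) := by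
      intro ω
      rw [Finset.sum_eq_single (fun i : s => ω i)]
      · have h : ∀ i ∈ s, ω i = e (fun i : s => ω i) i := fun i hi => by simp [e, hi]
        rw [cylInd_apply, if_pos h, ← hs _ _ h]
        simp
      · intro b _ hb
        rw [cylInd_apply, if_neg, Int.cast_zero, mul_zero]
        refine fun h => hb (funext fun i => ?_)
        rw [h i i.2]
        simp [e]
      · simp
    rw [integral_congr_ae (ae_of_all _ hg)]
    rw [integral_finsetSum _ fun b _ => (integrable_intCast μ _).const_mul _]
    simp_rw [integral_const_mul, hcyl]
    exact sum_mem fun b _ => mul_mem (intCast_mem _ _)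
      (prod_mem fun i _ => Subring.subset_closure ⟨_, rfl⟩)
  · intro hx
    rw [SetLike.mem_coe, Subring.mem_closure_iff] at hx
    induction hx using AddSubgroup.closure_induction with
    | mem y hy =>
      obtain ⟨s, a, rfl⟩ := exists_cylinder_of_mem_closure hm w hy
      exact ⟨cylInd s a, hcyl s a⟩
    | zero => exact ⟨0, by simp⟩
    | add y z _ _ hy hz =>
      obtain ⟨g, rfl⟩ := hy
      obtain ⟨h, rfl⟩ := hz
      refine ⟨g + h, ?_⟩
      rw [← integral_add (integrable_intCast μ g) (integrable_intCast μ h)]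
      simp
    | neg y _ hy =>
      obtain ⟨g, rfl⟩ := hy
      refine ⟨-g, ?_⟩
      rw [← integral_neg]
      simp
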